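/- Let k ≥ 1, let ν = (ν_1 ≥ ν_2 ≥ … ≥ ν_{k+1} ≥ 0) be a partition, and let n ≥ 1. Then, as polynomials in x_1,…,x_n (the Fulmek–Kleber identity): s^{[n]}_{(ν_1,…,ν_k)} · s^{[n]}_{(ν_2,…,ν_{k+1})} = s^{[n]}_{(ν_2,…,ν_k)} · s^{[n]}_{(ν_1,…,ν_{k+1})} + s^{[n]}_{(ν_2−1,…,ν_{k+1}−1)} · s^{[n]}_{(ν_1+1,…,ν_k+1)}, where by convention s^{[n]}_α := 0 if the integer sequence α is not a partition (i.e., contains a negative entry). -/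

import Mathlib

/-- A semistandard Young tableau of shape `(lam 0, lam 1, …, lam (k-1))` (so `lam i` is the
length of the `(i+1)`-st row), with entries in `{a, a+1, …, b}`: rows weakly increase,
columns strictly increase.  Entries outside the shape are `0`. -/
structure SSYT (k : ℕ) (lam : ℕ → ℤ) (a b : ℕ) where
  entry : ℕ → ℕ → ℕ
  zero_outside : ∀ i j : ℕ, ¬(i < k ∧ (j : ℤ) < lam i) → entry i j = 0
  lower : ∀ i j : ℕ, i < k → (j : ℤ) < lam i → a ≤ entry i j
  upper : ∀ i j : ℕ, i < k → (j : ℤ) < lam i → entry i j ≤ b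
  row_weak : ∀ i j₁ j₂ : ℕ, i < k → j₁ ≤ j₂ → (j₂ : ℤ) < lam i → entry i j₁ ≤ entry i j₂
  col_strict : ∀ i₁ i₂ j : ℕ, i₁ < i₂ → i₂ < k → (j : ℤ) < lam i₂ → entry i₁ j < entry i₂ j

/-- The monomial `Π_i x_i^{m(i,T)}` of a tableau: the product of `x_{T(c)}` over the
cells `c` of the shape. -/
noncomputable def SSYT.weight {k : ℕ} {lam : ℕ → ℤ} {a b : ℕ} (T : SSYT k lam a b) :
    MvPolynomial ℕ ℤ :=
  ∏ i ∈ Finset.range k, ∏ j ∈ Finset.range (lam i).toNat, MvPolynomial.X (T.entry i j)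

/-- `(lam 0, …, lam (k-1))` is a partition: weakly decreasing with nonnegative entries. -/
def IsPartitionSeq (k : ℕ) (lam : ℕ → ℤ) : Prop :=
  (∀ i, i + 1 < k → lam (i + 1) ≤ lam i) ∧ (∀ i, i < k → 0 ≤ lam i)

/-- The Schur polynomial `s^{[a,b]}_lam = Σ_T Π_i x_i^{m(i,T)}`, the sum running over all
semistandard Young tableaux of shape `lam` with entries in `{a,…,b}`; by convention it is
`0` if `lam` is not a partition. -/
noncomputable def schur (k : ℕ) (lam : ℕ → ℤ) (a b : ℕ) : MvPolynomial ℕ ℤ :=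
  letI := Classical.dec (IsPartitionSeq k lam)
  if IsPartitionSeq k lam then ∑ᶠ T : SSYT k lam a b, T.weight else 0

/-! Let `h_m` be the complete homogeneous symmetric polynomials. The Schur polynomial of a partition
`lam` is the Jacobi–Trudi determinant of `(h_{lam_i - i + j})`, because both satisfy the same
branching rule in the largest variable `x_{b+1}`. Deleting the entries `b + 1` of a tableau removes
a horizontal strip and so leaves a shape `mu` whose parts interlace those of `lam`. In the
determinant, `h_m[a, b+1] = h_m[a, b] + x_{b+1} h_{m-1}[a, b+1]` and row operations turn row `i`
into a combination of the rows `h_{t - i + j}[a, b]` with `lam_{i+1} ≤ t ≤ lam_i`, and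
multilinearity expands the result over the same shapes `mu`. The Fulmek–Kleber identity is then the
Desnanot–Jacobi identity for the Jacobi–Trudi matrix of `ν`: the minors that delete the first or
last row and the first or last column, and the interior minor, are again Jacobi–Trudi determinants.
-/

section Determinants

open Matrix

variable {l m R : Type*} [Fintype l] [DecidableEq l] [Fintype m] [DecidableEq m] [CommRing R]

theorem det_mul_det_toBlocks₁₁_adjugate (M : Matrix (l ⊕ m) (l ⊕ m) R) :
    M.det * M.adjugate.toBlocks₁₁.det = M.det ^ Fintype.card l * M.toBlocks₂₂.det := by
  have hadj : fromBlocks M.toBlocks₁₁ M.toBlocks₁₂ M.toBlocks₂₁ M.toBlocks₂₂ *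
      fromBlocks M.adjugate.toBlocks₁₁ M.adjugate.toBlocks₁₂
        M.adjugate.toBlocks₂₁ M.adjugate.toBlocks₂₂ =
      fromBlocks (M.det • 1) 0 0 (M.det • 1) := by
    simpa only [fromBlocks_toBlocks, ← fromBlocks_one, fromBlocks_smul, smul_zero] using
      mul_adjugate M
  rw [fromBlocks_multiply, fromBlocks_inj] at hadj
  obtain ⟨hdiag, -, hoff, -⟩ := hadj
  have hprod : M * fromBlocks M.adjugate.toBlocks₁₁ 0 M.adjugate.toBlocks₂₁ 1 =
      fromBlocks (M.det • 1) M.toBlocks₁₂ 0 M.toBlocks₂₂ := by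
    conv_lhs => enter [1]; rw [← fromBlocks_toBlocks M]
    simp only [fromBlocks_multiply, hdiag, hoff, Matrix.mul_zero, Matrix.mul_one, zero_add]
  simpa only [det_mul, det_fromBlocks_zero₁₂, det_fromBlocks_zero₂₁, det_smul, det_one, mul_one]
    using congrArg det hprod

theorem det_toBlocks₁₁_adjugate [Nonempty l] (M : Matrix (l ⊕ m) (l ⊕ m) R) :
    M.adjugate.toBlocks₁₁.det = M.det ^ (Fintype.card l - 1) * M.toBlocks₂₂.det := by
  -- The determinant of the generic matrix is not a zero divisor, so it can be cancelled.
  let G := mvPolynomialX (l ⊕ m) (l ⊕ m) ℤ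
  have hG : G.adjugate.toBlocks₁₁.det = G.det ^ (Fintype.card l - 1) * G.toBlocks₂₂.det := by
    apply mul_left_cancel₀ (det_mvPolynomialX_ne_zero (l ⊕ m) ℤ)
    rw [det_mul_det_toBlocks₁₁_adjugate, ← mul_assoc, mul_pow_sub_one Fintype.card_ne_zero]
  let φ : MvPolynomial ((l ⊕ m) × (l ⊕ m)) ℤ →ₐ[ℤ] R := MvPolynomial.aeval fun p => M p.1 p.2
  have hφ : φ.mapMatrix G = M := mvPolynomialX_mapMatrix_aeval ℤ M
  have hadj : φ.mapMatrix G.adjugate.toBlocks₁₁ = M.adjugate.toBlocks₁₁ := by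
    rw [← hφ, ← AlgHom.map_adjugate]
    rfl
  have hblock : φ.mapMatrix G.toBlocks₂₂ = M.toBlocks₂₂ := by
    rw [← hφ]
    rfl
  simpa only [map_mul, map_pow, AlgHom.map_det, hφ, hadj, hblock] using congrArg φ hG

/-- The indices `0, …, n + 1` split into the two end points and the interior, so that a matrix
becomes a block matrix whose lower right block is its interior minor. -/
noncomputable def endsSumInteriorEquiv (n : ℕ) : Fin 2 ⊕ Fin n ≃ Fin (n + 2) :=
  .ofBijective (Sum.elim ![0, Fin.last (n + 1)] fun i => i.castSucc.succ) <| by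
    rw [Fintype.bijective_iff_injective_and_card]
    refine ⟨.sumElim ?_ ?_ ?_, by simp [add_comm]⟩
    · simp only [Function.Injective, Fin.forall_fin_two]
      simp [Fin.ext_iff]
    · exact (Fin.succ_injective _).comp (Fin.castSucc_injective _)
    · simp only [Fin.forall_fin_two]
      exact ⟨fun i => (Fin.succ_ne_zero _).symm, fun i => i.succ.castSucc_ne_last.symm⟩

theorem desnanot_jacobi {n : ℕ} (M : Matrix (Fin (n + 2)) (Fin (n + 2)) R) :
    (M.submatrix Fin.castSucc Fin.castSucc).det * (M.submatrix Fin.succ Fin.succ).det =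
      (M.submatrix (fun i : Fin n => i.castSucc.succ) (fun i : Fin n => i.castSucc.succ)).det
          * M.det +
        (M.submatrix Fin.succ Fin.castSucc).det * (M.submatrix Fin.castSucc Fin.succ).det := by
  let e := endsSumInteriorEquiv n
  have hcompl := det_toBlocks₁₁_adjugate (M.submatrix e e)
  have hinterior : (M.submatrix e e).toBlocks₂₂ =
      M.submatrix (fun i : Fin n => i.castSucc.succ) (fun i : Fin n => i.castSucc.succ) := rfl
  have hfirst : e (Sum.inl 0) = 0 := rfl
  have hlast : e (Sum.inl 1) = Fin.last (n + 1) := rfl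
  have hsign : (-1 : R) ^ (n + 1) * (-1) ^ (n + 1) = 1 := by rw [← mul_pow]; simp
  simp only [hinterior, det_submatrix_equiv_self, adjugate_submatrix_equiv_self, det_fin_two,
    toBlocks₁₁, of_apply, submatrix_apply, hfirst, hlast, adjugate_fin_succ_eq_det_submatrix,
    Fin.succAbove_zero, Fin.succAbove_last, Fin.val_zero, Fin.val_last, Fintype.card_fin,
    Nat.add_one_sub_one, pow_add _ (n + 1), pow_zero, pow_one, add_zero, zero_add, one_mul]
    at hcompl
  linear_combination hcompl + ((M.submatrix Fin.succ Fin.castSucc).det *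
    (M.submatrix Fin.castSucc Fin.succ).det -
    (M.submatrix Fin.succ Fin.succ).det * (M.submatrix Fin.castSucc Fin.castSucc).det) * hsign

theorem det_eq_of_forall_row_eq_smul_add_succ {n : ℕ} {A B : Matrix (Fin (n + 1)) (Fin (n + 1)) R}
    (c : Fin n → R) (A_last : ∀ j, A (Fin.last n) j = B (Fin.last n) j)
    (A_castSucc : ∀ (i : Fin n) j, A i.castSucc j = B i.castSucc j + c i * A i.succ j) :
    A.det = B.det := by
  rw [← det_submatrix_equiv_self Fin.revPerm A, ← det_submatrix_equiv_self Fin.revPerm B]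
  refine det_eq_of_forall_row_eq_smul_add_pred (fun i => c i.rev) (fun j => ?_) fun i j => ?_
  · simpa using A_last j.rev
  · simpa [Fin.rev_succ, Fin.rev_castSucc] using A_castSucc i.rev j.rev

theorem det_sum_mul_rows {ι : Type*} (s : m → Finset ι) (c : m → ι → R) (f : m → ι → m → R) :
    (of fun i j => ∑ t ∈ s i, c i t * f i t j).det =
      ∑ t ∈ Fintype.piFinset s, (∏ i, c i (t i)) * (of fun i j => f i (t i) j).det := by
  have hrows : (of fun i j => ∑ t ∈ s i, c i t * f i t j) = fun i => ∑ t ∈ s i, c i t • f i t := by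
    ext i j
    simp
  calc (of fun i j => ∑ t ∈ s i, c i t * f i t j).det
      = detRowAlternating.toMultilinearMap fun i => ∑ t ∈ s i, c i t • f i t := by
        rw [hrows]; rfl
    _ = _ := by
        simp only [MultilinearMap.map_sum_finset, MultilinearMap.map_smul_univ, smul_eq_mul]
        rfl

end Determinants

section Tableaux

open Finset MvPolynomial

variable {k : ℕ} {lam mu : ℕ → ℤ} {a b c : ℕ}

theorem antitoneOn_Iio_of_forall_succ_le (hdec : ∀ i, i + 1 < k → lam (i + 1) ≤ lam i) :
    AntitoneOn lam (Set.Iio k) :=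
  antitoneOn_of_add_one_le Set.ordConnected_Iio fun i _ _ hi => hdec i hi

theorem IsPartitionSeq.le_of_le (hp : IsPartitionSeq k lam) {i j : ℕ} (hij : i ≤ j) (hj : j < k) :
    lam j ≤ lam i :=
  antitoneOn_Iio_of_forall_succ_le hp.1 (hij.trans_lt hj) hj hij

theorem SSYT.ext_of_mem_shape {S T : SSYT k lam a b}
    (h : ∀ i j : ℕ, i < k → (j : ℤ) < lam i → S.entry i j = T.entry i j) : S = T := by
  have hentry : S.entry = T.entry := by
    funext i j
    by_cases hc : i < k ∧ (j : ℤ) < lam i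
    · exact h i j hc.1 hc.2
    · rw [S.zero_outside i j hc, T.zero_outside i j hc]
  cases S
  cases T
  cases hentry
  rfl

instance SSYT.instFinite : Finite (SSYT k lam a b) := by
  let entries (T : SSYT k lam a b) (i : Fin k) (j : Fin (lam i).toNat) : Fin (b + 1) :=
    ⟨T.entry i j, Nat.lt_succ_of_le (T.upper i j i.isLt (Int.lt_toNat.mp j.isLt))⟩
  refine Finite.of_injective entries fun S T h => SSYT.ext_of_mem_shape fun i j hi hj => ?_
  simpa [entries] using congrFun (congrFun h ⟨i, hi⟩) ⟨j, Int.lt_toNat.mpr hj⟩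

noncomputable instance SSYT.instFintype : Fintype (SSYT k lam a b) := Fintype.ofFinite _

theorem schur_eq_sum (hp : IsPartitionSeq k lam) :
    schur k lam a b = ∑ T : SSYT k lam a b, T.weight := by
  rw [schur, if_pos hp, finsum_eq_sum_of_fintype]

theorem schur_eq_zero (hp : ¬ IsPartitionSeq k lam) : schur k lam a b = 0 := if_neg hp

theorem schur_eq_one_of_forall_eq_zero (hlam : ∀ i < k, lam i = 0) : schur k lam a b = 1 := by
  have hp : IsPartitionSeq k lam :=
    ⟨fun i hi => by rw [hlam i (by omega), hlam (i + 1) hi], fun i hi => (hlam i hi).ge⟩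
  let emptyTableau : SSYT k lam a b :=
    { entry := fun _ _ => 0
      zero_outside := fun _ _ _ => rfl
      lower := fun i j hi hj => by have := hlam i hi; omega
      upper := fun _ _ _ _ => b.zero_le
      row_weak := fun _ _ _ _ _ _ => le_rfl
      col_strict := fun _ i j _ hi hj => by have := hlam i hi; omega }
  rw [schur_eq_sum hp, Fintype.sum_eq_single emptyTableau]
  · exact prod_eq_one fun i hi => by simp [hlam i (mem_range.mp hi)]
  · refine fun T hT => absurd (SSYT.ext_of_mem_shape fun i j hi hj => ?_) hT
    have := hlam i hi
    omega

theorem schur_eq_zero_of_lt (hba : b < a) (hk : 0 < k) (hlam : 0 < lam 0) :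
    schur k lam a b = 0 := by
  by_cases hp : IsPartitionSeq k lam
  · have : IsEmpty (SSYT k lam a b) := ⟨fun T => by
      have hlower := T.lower 0 0 hk hlam
      have hupper := T.upper 0 0 hk hlam
      omega⟩
    rw [schur_eq_sum hp, univ_eq_empty, sum_empty]
  · exact schur_eq_zero hp

/-- The part of `lam` following the `i`-th one, with `0` following the last part. -/
def nextPart (k : ℕ) (lam : ℕ → ℤ) (i : ℕ) : ℤ := if i + 1 < k then lam (i + 1) else 0

theorem IsPartitionSeq.nextPart_le (hp : IsPartitionSeq k lam) {i : ℕ} (hi : i < k) :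
    nextPart k lam i ≤ lam i := by
  unfold nextPart
  split_ifs with h
  · exact hp.1 i h
  · exact hp.2 i hi

theorem IsPartitionSeq.nextPart_nonneg (hp : IsPartitionSeq k lam) (i : ℕ) :
    0 ≤ nextPart k lam i := by
  unfold nextPart
  split_ifs with h
  · exact hp.2 (i + 1) h
  · exact le_rfl

/-- The parts of `mu` interlace those of `lam`: `lam 0 ≥ mu 0 ≥ lam 1 ≥ mu 1 ≥ ⋯ ≥ mu (k - 1) ≥ 0`,
that is, `lam / mu` is a horizontal strip. The entries of `mu` beyond its `k` parts are required to
vanish, so that `mu` is determined by its parts. -/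
structure Interlaces (k : ℕ) (lam mu : ℕ → ℤ) : Prop where
  nextPart_le : ∀ i < k, nextPart k lam i ≤ mu i
  le : ∀ i < k, mu i ≤ lam i
  eq_zero : ∀ i, k ≤ i → mu i = 0

theorem Interlaces.le_of_lt (h : Interlaces k lam mu) (hp : IsPartitionSeq k lam) {i j : ℕ}
    (hij : i < j) (hj : j < k) : lam j ≤ mu i := by
  have hnext := h.nextPart_le i (by omega)
  rw [nextPart, if_pos (by omega)] at hnext
  exact (hp.le_of_le hij hj).trans hnext

theorem Interlaces.isPartitionSeq (h : Interlaces k lam mu) (hp : IsPartitionSeq k lam) :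
    IsPartitionSeq k mu :=
  ⟨fun i hi => (h.le (i + 1) hi).trans (h.le_of_lt hp i.lt_succ_self hi),
    fun i hi => (hp.nextPart_nonneg i).trans (h.nextPart_le i hi)⟩

/-- The finite set of all `mu` interlacing `lam`, over which the branching rule sums. -/
noncomputable def interlacing (k : ℕ) (lam : ℕ → ℤ) : Finset (ℕ → ℤ) :=
  (Fintype.piFinset fun i : Fin k => Icc (nextPart k lam i) (lam i)).map
    ⟨fun mu => Function.extend Fin.val mu 0, Function.extend_injective Fin.val_injective 0⟩

theorem mem_interlacing : mu ∈ interlacing k lam ↔ Interlaces k lam mu := by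
  simp only [interlacing, mem_map, Fintype.mem_piFinset, mem_Icc, Function.Embedding.coeFn_mk]
  constructor
  · rintro ⟨parts, hparts, rfl⟩
    have hval (i : ℕ) (hi : i < k) : Function.extend Fin.val parts 0 i = parts ⟨i, hi⟩ :=
      Fin.val_injective.extend_apply parts 0 ⟨i, hi⟩
    refine ⟨fun i hi => ?_, fun i hi => ?_, fun i hi => ?_⟩
    · exact (hparts ⟨i, hi⟩).1.trans_eq (hval i hi).symm
    · exact (hval i hi).trans_le (hparts ⟨i, hi⟩).2
    · exact Function.extend_apply' parts (0 : ℕ → ℤ) i fun ⟨j, hj⟩ => (hj ▸ j.isLt).not_ge hi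
  · intro h
    refine ⟨fun i => mu i, fun i => ⟨h.nextPart_le i i.isLt, h.le i i.isLt⟩, funext fun i => ?_⟩
    by_cases hi : i < k
    · exact Fin.val_injective.extend_apply (fun i : Fin k => mu i) 0 ⟨i, hi⟩
    · rw [Function.extend_apply' _ _ _ fun ⟨j, hj⟩ => hi (hj ▸ j.isLt), h.eq_zero i (by omega)]
      rfl

theorem lt_card_filter_range_iff {P : ℕ → Prop} [DecidablePred P] {n j : ℕ}
    (hP : ∀ i j, i ≤ j → j < n → P j → P i) (hj : j < n) : j < #{i ∈ range n | P i} ↔ P j := by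
  constructor
  · contrapose!
    intro hPj
    suffices hsub : {i ∈ range n | P i} ⊆ range j by simpa using card_le_card hsub
    intro i hi
    rw [mem_filter, mem_range] at hi
    by_contra hij
    exact hPj (hP j i (by simpa using hij) hi.1 hi.2)
  · intro hPj
    suffices hsub : range (j + 1) ⊆ {i ∈ range n | P i} by simpa using card_le_card hsub
    intro i hi
    rw [mem_range] at hi
    exact mem_filter.mpr ⟨mem_range.mpr (by omega), hP i j (by omega) hj hPj⟩

/-- The shape formed by the entries of `T` that are at most `b`: the `i`-th part counts those in
row `i`, and the entries beyond the `k` rows of `T` are `0`. -/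
def SSYT.shapeLE (T : SSYT k lam a c) (b i : ℕ) : ℤ :=
  if i < k then (#{j ∈ range (lam i).toNat | T.entry i j ≤ b} : ℤ) else 0

theorem SSYT.lt_shapeLE_iff (T : SSYT k lam a c) {i j : ℕ} (hi : i < k) (hj : (j : ℤ) < lam i) :
    (j : ℤ) < T.shapeLE b i ↔ T.entry i j ≤ b := by
  rw [shapeLE, if_pos hi, Nat.cast_lt]
  refine lt_card_filter_range_iff (fun j₁ j₂ hj₁₂ hj₂ => ?_) (Int.lt_toNat.mpr hj)
  exact (T.row_weak i j₁ j₂ hi hj₁₂ (Int.lt_toNat.mp hj₂)).trans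

theorem SSYT.shapeLE_nonneg (T : SSYT k lam a c) (b i : ℕ) : 0 ≤ T.shapeLE b i := by
  unfold shapeLE
  positivity

theorem SSYT.shapeLE_le (T : SSYT k lam a c) (hp : IsPartitionSeq k lam) {i : ℕ} (hi : i < k) :
    T.shapeLE b i ≤ lam i := by
  have hcard := card_filter_le (range (lam i).toNat) fun j => T.entry i j ≤ b
  rw [card_range] at hcard
  rw [shapeLE, if_pos hi]
  exact (Int.le_toNat (hp.2 i hi)).mp hcard

theorem SSYT.eq_shapeLE_of_forall_lt_iff (T : SSYT k lam a c) {i : ℕ} (hi : i < k) {m : ℤ}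
    (hm : 0 ≤ m) (hmlam : m ≤ lam i)
    (h : ∀ j : ℕ, (j : ℤ) < lam i → ((j : ℤ) < m ↔ T.entry i j ≤ b)) : m = T.shapeLE b i := by
  have hfilter : {j ∈ range (lam i).toNat | T.entry i j ≤ b} = range m.toNat := by
    ext j
    simp only [mem_filter, mem_range]
    constructor
    · exact fun ⟨hj, hjb⟩ => Int.lt_toNat.mpr ((h j (Int.lt_toNat.mp hj)).mpr hjb)
    · exact fun hj => ⟨by omega, (h j (by omega)).mp (by omega)⟩
  rw [shapeLE, if_pos hi, hfilter, card_range, Int.toNat_of_nonneg hm]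

theorem SSYT.interlaces_shapeLE (T : SSYT k lam a (b + 1)) (hp : IsPartitionSeq k lam) :
    Interlaces k lam (T.shapeLE b) where
  nextPart_le i hi := by
    unfold nextPart
    split_ifs with hnext
    · -- A cell of row `i` above a cell of row `i + 1` has an entry below `b + 1`.
      by_contra! hlt
      obtain ⟨j, hj⟩ := Int.eq_ofNat_of_zero_le (T.shapeLE_nonneg b i)
      rw [hj] at hlt
      have hle : T.entry i j ≤ b := by
        have hcol := T.col_strict i (i + 1) j i.lt_succ_self hnext hlt
        have hupper := T.upper (i + 1) j hnext hlt
        omega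
      have := (T.lt_shapeLE_iff hi (hlt.trans_le (hp.1 i hnext))).mpr hle
      omega
    · exact T.shapeLE_nonneg b i
  le i hi := T.shapeLE_le hp hi
  eq_zero i hi := if_neg (by omega)

/-- The tableau formed by the entries of `T` that are at most `b`. -/
def SSYT.restrictLE (T : SSYT k lam a c) (b : ℕ) (hp : IsPartitionSeq k lam) :
    SSYT k (T.shapeLE b) a b where
  entry i j := if i < k ∧ (j : ℤ) < T.shapeLE b i then T.entry i j else 0
  zero_outside i j h := if_neg h
  lower i j hi hj := by
    rw [if_pos ⟨hi, hj⟩]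
    exact T.lower i j hi (hj.trans_le (T.shapeLE_le hp hi))
  upper i j hi hj := by
    rw [if_pos ⟨hi, hj⟩]
    exact (T.lt_shapeLE_iff hi (hj.trans_le (T.shapeLE_le hp hi))).mp hj
  row_weak i j₁ j₂ hi hj hj₂ := by
    rw [if_pos ⟨hi, by omega⟩, if_pos ⟨hi, hj₂⟩]
    exact T.row_weak i j₁ j₂ hi hj (hj₂.trans_le (T.shapeLE_le hp hi))
  col_strict i₁ i₂ j hi hi₂ hj := by
    have hj₂ : (j : ℤ) < lam i₂ := hj.trans_le (T.shapeLE_le hp hi₂)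
    have hj₁ : (j : ℤ) < lam i₁ := hj₂.trans_le (hp.le_of_le hi.le hi₂)
    have hlt := T.col_strict i₁ i₂ j hi hi₂ hj₂
    have hle := (T.lt_shapeLE_iff hi₂ hj₂).mp hj
    have hj₁' := (T.lt_shapeLE_iff (hi.trans hi₂) hj₁).mpr (hlt.le.trans hle)
    rwa [if_pos ⟨hi.trans hi₂, hj₁'⟩, if_pos ⟨hi₂, hj⟩]

/-- The tableau obtained from `S` by filling the horizontal strip `lam / mu` with `b + 1`. -/
def SSYT.fillStrip (S : SSYT k mu a b) (hab : a ≤ b + 1) (hp : IsPartitionSeq k lam)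
    (hm : Interlaces k lam mu) : SSYT k lam a (b + 1) where
  entry i j := if i < k ∧ (j : ℤ) < lam i then
    if (j : ℤ) < mu i then S.entry i j else b + 1 else 0
  zero_outside i j h := if_neg h
  lower i j hi hj := by
    simp only [hi, hj, and_self, if_true]
    split_ifs with hjmu
    · exact S.lower i j hi hjmu
    · exact hab
  upper i j hi hj := by
    simp only [hi, hj, and_self, if_true]
    split_ifs with hjmu
    · exact (S.upper i j hi hjmu).trans b.le_succ
    · exact le_rfl
  row_weak i j₁ j₂ hi hj hj₂ := by
    have hj₁ : (j₁ : ℤ) < lam i := (Int.ofNat_le.mpr hj).trans_lt hj₂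
    simp only [hi, hj₁, hj₂, and_self, if_true]
    split_ifs with hj₁mu hj₂mu hj₂mu
    · exact S.row_weak i j₁ j₂ hi hj hj₂mu
    · exact (S.upper i j₁ hi hj₁mu).trans b.le_succ
    · omega
    · exact le_rfl
  col_strict i₁ i₂ j hi hi₂ hj := by
    have hi₁ : i₁ < k := hi.trans hi₂
    have hj₁mu : (j : ℤ) < mu i₁ := hj.trans_le (hm.le_of_lt hp hi hi₂)
    have hj₁ : (j : ℤ) < lam i₁ := hj₁mu.trans_le (hm.le i₁ hi₁)
    simp only [hi₁, hi₂, hj₁, hj, hj₁mu, and_self, if_true]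
    split_ifs with hj₂mu
    · exact S.col_strict i₁ i₂ j hi hi₂ hj₂mu
    · exact Nat.lt_succ_of_le (S.upper i₁ j hi₁ hj₁mu)

section FillStrip

variable (S : SSYT k mu a b) (hab : a ≤ b + 1) (hp : IsPartitionSeq k lam)
  (hm : Interlaces k lam mu)

theorem SSYT.fillStrip_entry_of_lt {i j : ℕ} (hi : i < k) (hj : (j : ℤ) < mu i) :
    (S.fillStrip hab hp hm).entry i j = S.entry i j := by
  simp only [fillStrip, if_pos (And.intro hi (hj.trans_le (hm.le i hi))), if_pos hj]

theorem SSYT.fillStrip_entry_of_le {i j : ℕ} (hi : i < k) (hmuj : mu i ≤ j)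
    (hj : (j : ℤ) < lam i) : (S.fillStrip hab hp hm).entry i j = b + 1 := by
  simp only [fillStrip, if_pos (And.intro hi hj), if_neg hmuj.not_gt]

theorem SSYT.shapeLE_fillStrip : (S.fillStrip hab hp hm).shapeLE b = mu := by
  funext i
  by_cases hi : i < k
  · refine (SSYT.eq_shapeLE_of_forall_lt_iff _ hi ((hm.isPartitionSeq hp).2 i hi) (hm.le i hi)
      fun j hj => ?_).symm
    rcases lt_or_ge (j : ℤ) (mu i) with hjmu | hjmu
    · simpa [S.fillStrip_entry_of_lt hab hp hm hi hjmu, hjmu] using S.upper i j hi hjmu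
    · simp [S.fillStrip_entry_of_le hab hp hm hi hjmu hj, hjmu]
  · rw [shapeLE, if_neg hi, hm.eq_zero i (by omega)]

theorem SSYT.fillStrip_injective :
    Function.Injective fun S : SSYT k mu a b => S.fillStrip hab hp hm := by
  refine fun S S' h => SSYT.ext_of_mem_shape fun i j hi hj => ?_
  rw [← S.fillStrip_entry_of_lt hab hp hm hi hj, ← S'.fillStrip_entry_of_lt hab hp hm hi hj]
  exact congrArg (fun T : SSYT k lam a (b + 1) => T.entry i j) h

theorem SSYT.fillStrip_restrictLE (T : SSYT k lam a (b + 1)) :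
    (T.restrictLE b hp).fillStrip hab hp (T.interlaces_shapeLE hp) = T := by
  refine SSYT.ext_of_mem_shape fun i j hi hj => ?_
  rcases lt_or_ge (j : ℤ) (T.shapeLE b i) with hjb | hjb
  · rw [fillStrip_entry_of_lt _ hab hp _ hi hjb]
    exact if_pos ⟨hi, hjb⟩
  · rw [fillStrip_entry_of_le _ hab hp _ hi hjb hj]
    have hgt : ¬ T.entry i j ≤ b := (T.lt_shapeLE_iff hi hj).not.mp hjb.not_gt
    have hupper := T.upper i j hi hj
    omega

theorem SSYT.weight_fillStrip : (S.fillStrip hab hp hm).weight =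
    (∏ i ∈ range k, X (b + 1) ^ (lam i - mu i).toNat) * S.weight := by
  unfold SSYT.weight
  rw [← prod_mul_distrib]
  refine prod_congr rfl fun i hi => ?_
  rw [mem_range] at hi
  have hmu : 0 ≤ mu i := (hm.isPartitionSeq hp).2 i hi
  have hle : (mu i).toNat ≤ (lam i).toNat := Int.toNat_le_toNat (hm.le i hi)
  rw [← prod_range_mul_prod_Ico _ hle, mul_comm]
  congr 1
  · have hstrip : ∀ j ∈ Ico (mu i).toNat (lam i).toNat,
        (X ((S.fillStrip hab hp hm).entry i j) : MvPolynomial ℕ ℤ) = X (b + 1) := by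
      intro j hj
      rw [mem_Ico] at hj
      rw [S.fillStrip_entry_of_le hab hp hm hi (by omega) (by omega)]
    rw [prod_congr rfl hstrip, prod_const, Nat.card_Ico,
      Int.toNat_sub'' (hmu.trans (hm.le i hi)) hmu]
  · refine prod_congr rfl fun j hj => ?_
    rw [S.fillStrip_entry_of_lt hab hp hm hi (Int.lt_toNat.mp (mem_range.mp hj))]

end FillStrip

-- Deleting the entries `b + 1` of a tableau is inverse to filling a horizontal strip with `b + 1`.
theorem schur_succ (hab : a ≤ b + 1) (hp : IsPartitionSeq k lam) :
    schur k lam a (b + 1) = ∑ mu ∈ interlacing k lam,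
      (∏ i ∈ range k, X (b + 1) ^ (lam i - mu i).toNat) * schur k mu a b := by
  have hexpand : ∀ mu ∈ interlacing k lam,
      (∏ i ∈ range k, X (b + 1) ^ (lam i - mu i).toNat) * schur k mu a b =
        ∑ S : SSYT k mu a b, (∏ i ∈ range k, X (b + 1) ^ (lam i - mu i).toNat) * S.weight :=
    fun mu hmu => by rw [schur_eq_sum ((mem_interlacing.mp hmu).isPartitionSeq hp), mul_sum]
  rw [schur_eq_sum hp, sum_congr rfl hexpand, sum_sigma']
  have hinterlaces {p : (mu : ℕ → ℤ) × SSYT k mu a b}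
      (hmem : p ∈ (interlacing k lam).sigma fun _ => univ) : Interlaces k lam p.1 :=
    mem_interlacing.mp (mem_sigma.mp hmem).1
  symm
  refine sum_bij (fun p hmem => p.2.fillStrip hab hp (hinterlaces hmem)) ?_ ?_ ?_ ?_
  · exact fun _ _ => mem_univ _
  · rintro ⟨mu, S⟩ hmem ⟨mu', S'⟩ hmem' h
    obtain rfl : mu = mu' := by
      rw [← S.shapeLE_fillStrip hab hp (hinterlaces hmem),
        ← S'.shapeLE_fillStrip hab hp (hinterlaces hmem')]
      exact congrArg (SSYT.shapeLE · b) h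
    exact congrArg (Sigma.mk mu) (SSYT.fillStrip_injective hab hp (hinterlaces hmem) h)
  · exact fun T _ => ⟨⟨T.shapeLE b, T.restrictLE b hp⟩,
      mem_sigma.mpr ⟨mem_interlacing.mpr (T.interlaces_shapeLE hp), mem_univ _⟩,
      T.fillStrip_restrictLE hab hp⟩
  · exact fun p hmem => (p.2.weight_fillStrip hab hp (hinterlaces hmem)).symm

end Tableaux

section JacobiTrudi

open Finset MvPolynomial Matrix

variable {k : ℕ} {lam : ℕ → ℤ} {a b : ℕ}

/-- The complete homogeneous symmetric polynomial `h_m` in the variables `x_a, …, x_b`, as the Schur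
polynomial of the one-row shape `(m)`; in particular it vanishes for `m < 0`. -/
noncomputable def completeHomogeneous (a b : ℕ) (m : ℤ) : MvPolynomial ℕ ℤ :=
  schur 1 (Pi.single 0 m) a b

theorem isPartitionSeq_single {m : ℤ} (hm : 0 ≤ m) : IsPartitionSeq 1 (Pi.single 0 m) := by
  refine ⟨fun i hi => by omega, fun i hi => ?_⟩
  obtain rfl : i = 0 := by omega
  simpa using hm

theorem completeHomogeneous_of_neg {m : ℤ} (hm : m < 0) : completeHomogeneous a b m = 0 :=
  schur_eq_zero fun hp => hm.not_ge (by simpa using hp.2 0 one_pos)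

theorem completeHomogeneous_of_lt (hba : b < a) (m : ℤ) :
    completeHomogeneous a b m = if m = 0 then 1 else 0 := by
  split_ifs with hm
  · exact schur_eq_one_of_forall_eq_zero fun i _ => by simp [hm]
  · rcases lt_or_gt_of_ne hm with hneg | hpos
    · exact completeHomogeneous_of_neg hneg
    · exact schur_eq_zero_of_lt hba one_pos (by simpa using hpos)

theorem interlaces_single_iff {m : ℤ} {mu : ℕ → ℤ} :
    Interlaces 1 (Pi.single 0 m) mu ↔ ∃ t ∈ Icc 0 m, Pi.single 0 t = mu := by
  constructor
  · intro h
    refine ⟨mu 0, ?_, funext fun i => ?_⟩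
    · simpa [nextPart] using And.intro (h.nextPart_le 0 one_pos) (h.le 0 one_pos)
    · rcases i.eq_zero_or_pos with rfl | hi
      · simp
      · rw [Pi.single_eq_of_ne hi.ne', h.eq_zero i hi]
  · rintro ⟨t, ht, rfl⟩
    rw [mem_Icc] at ht
    refine ⟨fun i hi => ?_, fun i hi => ?_, fun i hi => ?_⟩
    · obtain rfl : i = 0 := by omega
      simpa [nextPart] using ht.1
    · obtain rfl : i = 0 := by omega
      simpa using ht.2
    · rw [Pi.single_eq_of_ne (Nat.one_le_iff_ne_zero.mp hi)]

theorem completeHomogeneous_succ_eq_sum (hab : a ≤ b + 1) (m : ℤ) :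
    completeHomogeneous a (b + 1) m =
      ∑ t ∈ Icc 0 m, X (b + 1) ^ (m - t).toNat * completeHomogeneous a b t := by
  rcases lt_or_ge m 0 with hm | hm
  · rw [completeHomogeneous_of_neg hm, Icc_eq_empty hm.not_ge, sum_empty]
  have hshapes : interlacing 1 (Pi.single 0 m) =
      (Icc 0 m).map ⟨Pi.single 0, Pi.single_injective 0⟩ := by
    ext mu
    rw [mem_interlacing, interlaces_single_iff, mem_map]
    rfl
  rw [completeHomogeneous, schur_succ hab (isPartitionSeq_single hm), hshapes, sum_map]
  simp [completeHomogeneous]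

theorem completeHomogeneous_succ (hab : a ≤ b + 1) (m : ℤ) :
    completeHomogeneous a (b + 1) m =
      completeHomogeneous a b m + X (b + 1) * completeHomogeneous a (b + 1) (m - 1) := by
  rcases lt_or_ge m 0 with hm | hm
  · simp [completeHomogeneous_of_neg hm, completeHomogeneous_of_neg (show m - 1 < 0 by omega)]
  have hinsert : Icc 0 m = insert m (Icc 0 (m - 1)) := by
    ext t
    simp only [mem_insert, mem_Icc]
    omega
  rw [completeHomogeneous_succ_eq_sum hab m, completeHomogeneous_succ_eq_sum hab (m - 1), hinsert,
    sum_insert (by simp), mul_sum, sub_self, Int.toNat_zero, pow_zero, one_mul]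
  congr 1
  refine sum_congr rfl fun t ht => ?_
  rw [mem_Icc] at ht
  rw [show (m - t).toNat = (m - 1 - t).toNat + 1 by omega]
  ring

theorem completeHomogeneous_add_eq_sum_Icc_add (hab : a ≤ b + 1) {l m : ℤ} (hlm : l - 1 ≤ m)
    (d : ℤ) :
    completeHomogeneous a (b + 1) (m + d) =
      ∑ t ∈ Icc l m, X (b + 1) ^ (m - t).toNat * completeHomogeneous a b (t + d) +
        X (b + 1) ^ (m + 1 - l).toNat * completeHomogeneous a (b + 1) (l - 1 + d) := by
  induction m, hlm using Int.leInduction with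
  | base => simp
  | succ m hlm ih =>
    have hinsert : Icc l (m + 1) = insert (m + 1) (Icc l m) := by
      ext t
      simp only [mem_insert, mem_Icc]
      omega
    have hpow : ∀ t ∈ Icc l m,
        X (b + 1) ^ (m + 1 - t).toNat * completeHomogeneous a b (t + d) =
          X (b + 1) * (X (b + 1) ^ (m - t).toNat * completeHomogeneous a b (t + d)) := by
      intro t ht
      rw [mem_Icc] at ht
      rw [show (m + 1 - t).toNat = (m - t).toNat + 1 by omega]
      ring
    rw [completeHomogeneous_succ hab, show m + 1 + d - 1 = m + d by ring, ih, hinsert,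
      sum_insert (by simp), sum_congr rfl hpow, ← mul_sum, sub_self, Int.toNat_zero,
      show (m + 1 + 1 - l).toNat = (m + 1 - l).toNat + 1 by omega]
    ring

/-- The matrix `(h_{lam_i - i + j})` of the Jacobi–Trudi formula in the variables `x_a, …, x_b`. -/
noncomputable def jacobiTrudiMatrix (k : ℕ) (lam : ℕ → ℤ) (a b : ℕ) :
    Matrix (Fin k) (Fin k) (MvPolynomial ℕ ℤ) :=
  of fun i j => completeHomogeneous a b (lam i + (j - i))

theorem det_jacobiTrudiMatrix_of_lt (hba : b < a) (hp : IsPartitionSeq k lam) :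
    (jacobiTrudiMatrix k lam a b).det = schur k lam a b := by
  by_cases hpos : 0 < k ∧ 0 < lam 0
  · rw [schur_eq_zero_of_lt hba hpos.1 hpos.2]
    refine det_eq_zero_of_row_eq_zero ⟨0, hpos.1⟩ fun j => ?_
    rw [jacobiTrudiMatrix, of_apply, completeHomogeneous_of_lt hba, if_neg]
    push_cast
    omega
  · have hzero : ∀ i < k, lam i = 0 := by
      intro i hi
      have hnonneg := hp.2 i hi
      have hle := hp.le_of_le i.zero_le hi
      omega
    have hone : jacobiTrudiMatrix k lam a b = 1 := by
      ext1 i j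
      rw [jacobiTrudiMatrix, of_apply, completeHomogeneous_of_lt hba, hzero i i.isLt, one_apply]
      exact if_congr (by rw [Fin.ext_iff]; omega) rfl rfl
    rw [hone, det_one, schur_eq_one_of_forall_eq_zero hzero]

-- Subtracting from each row the multiple of the next one supplied by
-- `completeHomogeneous_add_eq_sum_Icc_add` leaves only `h_m` in `x_a, …, x_b`.
theorem det_jacobiTrudiMatrix_succ_eq_det_sum (hab : a ≤ b + 1) (hp : IsPartitionSeq k lam) :
    (jacobiTrudiMatrix k lam a (b + 1)).det =
      (of fun i j : Fin k => ∑ t ∈ Icc (nextPart k lam i) (lam i),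
        X (b + 1) ^ (lam i - t).toNat * completeHomogeneous a b (t + (j - i))).det := by
  cases k with
  | zero => simp
  | succ k =>
    have hrow (i j : Fin (k + 1)) := completeHomogeneous_add_eq_sum_Icc_add hab
      (by linarith [hp.nextPart_le i.isLt] : nextPart (k + 1) lam i - 1 ≤ lam i) ((j : ℤ) - i)
    refine det_eq_of_forall_row_eq_smul_add_succ
      (fun i => X (b + 1) ^ (lam i.castSucc + 1 - nextPart (k + 1) lam i.castSucc).toNat)
      (fun j => ?_) fun i j => ?_
    · have hneg :
          nextPart (k + 1) lam (Fin.last k) - 1 + ((j : ℤ) - (Fin.last k : Fin (k + 1))) < 0 := by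
        rw [nextPart, Fin.val_last, if_neg (lt_irrefl _)]
        omega
      rw [jacobiTrudiMatrix, of_apply, hrow, completeHomogeneous_of_neg hneg, mul_zero, add_zero]
      rfl
    · have hnext : nextPart (k + 1) lam i.castSucc - 1 + ((j : ℤ) - i.castSucc) =
          lam i.succ + (j - i.succ) := by
        rw [nextPart, Fin.val_castSucc, if_pos (by omega), Fin.val_succ]
        push_cast
        ring
      rw [jacobiTrudiMatrix, of_apply, hrow, hnext]
      rfl

theorem det_jacobiTrudiMatrix_succ (hab : a ≤ b + 1) (hp : IsPartitionSeq k lam) :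
    (jacobiTrudiMatrix k lam a (b + 1)).det = ∑ mu ∈ interlacing k lam,
      (∏ i ∈ range k, X (b + 1) ^ (lam i - mu i).toNat) * (jacobiTrudiMatrix k mu a b).det := by
  rw [det_jacobiTrudiMatrix_succ_eq_det_sum hab hp, det_sum_mul_rows, interlacing, sum_map]
  simp only [prod_range, jacobiTrudiMatrix, Function.Embedding.coeFn_mk,
    Fin.val_injective.extend_apply]

theorem schur_eq_det_of_isPartitionSeq (ha : 1 ≤ a) (hp : IsPartitionSeq k lam) :
    schur k lam a b = (jacobiTrudiMatrix k lam a b).det := by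
  induction b generalizing lam with
  | zero => exact (det_jacobiTrudiMatrix_of_lt ha hp).symm
  | succ b ih =>
    rcases lt_or_ge (b + 1) a with hba | hab
    · exact (det_jacobiTrudiMatrix_of_lt hba hp).symm
    rw [schur_succ hab hp, det_jacobiTrudiMatrix_succ hab hp]
    refine sum_congr rfl fun mu hmu => ?_
    rw [ih ((mem_interlacing.mp hmu).isPartitionSeq hp)]

theorem schur_eq_det_jacobiTrudiMatrix (ha : 1 ≤ a)
    (hdec : ∀ i, i + 1 < k → lam (i + 1) ≤ lam i) :
    schur k lam a b = (jacobiTrudiMatrix k lam a b).det := by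
  by_cases hp : IsPartitionSeq k lam
  · exact schur_eq_det_of_isPartitionSeq ha hp
  obtain ⟨i, hi, hneg⟩ : ∃ i < k, lam i < 0 := by
    by_contra! hnonneg
    exact hp ⟨hdec, hnonneg⟩
  -- The last part is negative as well, so the last row involves only `h_m` with `m < 0`.
  have hlast : lam (k - 1) ≤ lam i :=
    antitoneOn_Iio_of_forall_succ_le hdec hi (Nat.sub_one_lt_of_lt hi) (Nat.le_sub_one_of_lt hi)
  rw [schur_eq_zero hp]
  refine (det_eq_zero_of_row_eq_zero ⟨k - 1, Nat.sub_one_lt_of_lt hi⟩ fun j => ?_).symm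
  apply completeHomogeneous_of_neg
  dsimp only
  omega

theorem schur_eq_det_submatrix_jacobiTrudiMatrix {l : ℕ} {mu : ℕ → ℤ} (ha : 1 ≤ a)
    (hdec : ∀ i, i + 1 < l → mu (i + 1) ≤ mu i) (lam : ℕ → ℤ) (f g : Fin l → Fin k)
    (hindex : ∀ i j, lam (f i) + ((g j : ℤ) - f i) = mu i + ((j : ℤ) - i)) :
    schur l mu a b = ((jacobiTrudiMatrix k lam a b).submatrix f g).det := by
  rw [schur_eq_det_jacobiTrudiMatrix ha hdec]
  congr 1
  ext1 i j
  simp only [jacobiTrudiMatrix, submatrix_apply, of_apply, hindex]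

end JacobiTrudi

theorem stmt_17_general (k a b : ℕ) (hk : 1 ≤ k) (ha : 1 ≤ a) (nu : ℕ → ℤ)
    (hdec : ∀ i, i + 1 < k + 1 → nu (i + 1) ≤ nu i) :
    schur k nu a b * schur k (fun i => nu (i + 1)) a b =
      schur (k - 1) (fun i => nu (i + 1)) a b * schur (k + 1) nu a b +
        schur k (fun i => nu (i + 1) - 1) a b * schur k (fun i => nu i + 1) a b := by
  obtain ⟨k, rfl⟩ := Nat.exists_eq_add_of_le' hk
  have hfront (i : ℕ) (hi : i + 1 < k + 1) : nu (i + 1) ≤ nu i := hdec i (by omega)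
  have htail (i : ℕ) (hi : i + 1 < k + 1) : nu (i + 1 + 1) ≤ nu (i + 1) := hdec (i + 1) (by omega)
  rw [Nat.add_sub_cancel, schur_eq_det_jacobiTrudiMatrix ha hdec,
    schur_eq_det_submatrix_jacobiTrudiMatrix ha hfront nu Fin.castSucc Fin.castSucc
      fun i j => by simp,
    schur_eq_det_submatrix_jacobiTrudiMatrix (mu := fun i => nu (i + 1)) ha htail nu
      Fin.succ Fin.succ fun i j => by simp,
    schur_eq_det_submatrix_jacobiTrudiMatrix (mu := fun i => nu (i + 1)) ha
      (fun i hi => htail i (by omega)) nu (fun i : Fin k => i.castSucc.succ)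
      (fun i : Fin k => i.castSucc.succ) fun i j => by simp,
    schur_eq_det_submatrix_jacobiTrudiMatrix (mu := fun i => nu (i + 1) - 1) ha
      (fun i hi => sub_le_sub_right (htail i hi) 1) nu Fin.succ Fin.castSucc
      fun i j => by simp only [Fin.val_succ, Fin.val_castSucc]; push_cast; ring,
    schur_eq_det_submatrix_jacobiTrudiMatrix (mu := fun i => nu i + 1) ha
      (fun i hi => add_le_add_left (hfront i hi) 1) nu Fin.castSucc Fin.succ
      fun i j => by simp only [Fin.val_succ, Fin.val_castSucc]; push_cast; ring]
  exact desnanot_jacobi (jacobiTrudiMatrix (k + 2) nu a b)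

/-- the Fulmek–Kleber identity: for a partition
`ν = (ν_1 ≥ … ≥ ν_{k+1} ≥ 0)` with `k ≥ 1` and any `n ≥ 1`:
`s^{[n]}_{(ν_1,…,ν_k)} · s^{[n]}_{(ν_2,…,ν_{k+1})}
 = s^{[n]}_{(ν_2,…,ν_k)} · s^{[n]}_{(ν_1,…,ν_{k+1})}
 + s^{[n]}_{(ν_2-1,…,ν_{k+1}-1)} · s^{[n]}_{(ν_1+1,…,ν_k+1)}`,
with `s^{[n]}_α = 0` when `α` is not a partition (built into `schur`). -/
theorem stmt_17 (k n : ℕ) (hk : 1 ≤ k) (hn : 1 ≤ n) (nu : ℕ → ℤ)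
    (hdec : ∀ i, i + 1 < k + 1 → nu (i + 1) ≤ nu i) (hpos : ∀ i, i < k + 1 → 0 ≤ nu i) :
    schur k nu 1 n * schur k (fun i => nu (i + 1)) 1 n =
      schur (k - 1) (fun i => nu (i + 1)) 1 n * schur (k + 1) nu 1 n +
        schur k (fun i => nu (i + 1) - 1) 1 n * schur k (fun i => nu i + 1) 1 n :=
  stmt_17_general k 1 n hk le_rfl nu hdec
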